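/- Consider the individual storage profit-maximization problem over the feasible set S with price vector π ∈ ℝ^T, and let (g^D, g^C, E) ∈ S be a dispatch such that at some interval t: 0 < g^D_t < ḡ^D; the discharge ramp constraints between intervals t−1 and t and between t and t+1 are strictly nonbinding at (g^D, g^C, E); and E̲ < E_{t'} < Ē for all t' ≥ t. If π_t ≠ (f^D_t)'(g^D_t), then there exists (p^D, p^C, e) ∈ S with profit(π; p^D, p^C) > profit(π; g^D, g^C); consequently LOC(π) = Q(π) − profit(π; g^D, g^C) > 0. The analogous conclusion holds in the charging case: if 0 < g^C_t < ḡ^C with strictly nonbinding charging ramp constraints around t, strictly interior SOC from t on, and π_t ≠ (f^C_t)'(g^C_t), then LOC(π) > 0. -/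

import Mathlib

/-- Parameters of a (generalized) energy storage resource (ESR):
discharge/charge efficiencies, initial SOC and initial charge/discharge
levels, ramp limits, SOC limits and capacity limits. -/
structure ESRParams where
  xiD : ℝ
  xiC : ℝ
  hxiD : xiD ∈ Set.Ioc (0 : ℝ) 1
  hxiC : xiC ∈ Set.Ioc (0 : ℝ) 1
  E0 : ℝ
  pD0 : ℝ
  pC0 : ℝ
  rDup : ℝ
  rDdn : ℝ
  rCup : ℝ
  rCdn : ℝ
  hrDup : 0 ≤ rDup
  hrDdn : 0 ≤ rDdn
  hrCup : 0 ≤ rCup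
  hrCdn : 0 ≤ rCdn
  Elo : ℝ
  Ehi : ℝ
  hElim : Elo ≤ Ehi
  gDmax : ℝ
  gCmax : ℝ
  hgD : 0 < gDmax
  hgC : 0 < gCmax

/-- The individual feasible set `S` of the ESR over horizon `T`
(intervals `t = 1, …, T`; index `0` carries the initial conditions):
SOC transition, ramp constraints, SOC limits and capacity limits. -/
def Feasible (T : ℕ) (P : ESRParams) (pD pC e : ℕ → ℝ) : Prop :=
  pD 0 = P.pD0 ∧ pC 0 = P.pC0 ∧ e 0 = P.E0 ∧
  ∀ t ∈ Finset.Icc 1 T,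
    e t - e (t - 1) = P.xiC * pC t - pD t / P.xiD ∧
    -P.rDdn ≤ pD t - pD (t - 1) ∧ pD t - pD (t - 1) ≤ P.rDup ∧
    -P.rCdn ≤ pC t - pC (t - 1) ∧ pC t - pC (t - 1) ≤ P.rCup ∧
    P.Elo ≤ e t ∧ e t ≤ P.Ehi ∧
    0 ≤ pD t ∧ pD t ≤ P.gDmax ∧
    0 ≤ pC t ∧ pC t ≤ P.gCmax

/-- Profit of the ESR under (possibly distinct) discharge/charge price
sequences `piD, piC`, with bid curves `fD` (discharge cost) and `fC`
(charging benefit).  For a uniform price `π`, take `piD = piC = π`. -/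
def profit (T : ℕ) (piD piC : ℕ → ℝ) (fD fC : ℕ → ℝ → ℝ)
    (pD pC : ℕ → ℝ) : ℝ :=
  ∑ t ∈ Finset.Icc 1 T,
    (piD t * pD t - piC t * pC t - fD t (pD t) + fC t (pC t))

/-- The ESR is "marginal" in discharging at interval `t`: discharge strictly
within capacity, discharge ramp constraints strictly nonbinding between
`t-1` and `t` and between `t` and `t+1` (the latter only required when
`t < T`), and SOC strictly interior from `t` to the end of the horizon. -/
def MarginalD (T : ℕ) (P : ESRParams) (gD e : ℕ → ℝ) (t : ℕ) : Prop :=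
  0 < gD t ∧ gD t < P.gDmax ∧
  (-P.rDdn < gD t - gD (t - 1) ∧ gD t - gD (t - 1) < P.rDup) ∧
  (t < T → -P.rDdn < gD (t + 1) - gD t ∧ gD (t + 1) - gD t < P.rDup) ∧
  (∀ t', t ≤ t' → t' ≤ T → P.Elo < e t' ∧ e t' < P.Ehi)

/-- The ESR is "marginal" in charging at interval `t`. -/
def MarginalC (T : ℕ) (P : ESRParams) (gC e : ℕ → ℝ) (t : ℕ) : Prop :=
  0 < gC t ∧ gC t < P.gCmax ∧
  (-P.rCdn < gC t - gC (t - 1) ∧ gC t - gC (t - 1) < P.rCup) ∧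
  (t < T → -P.rCdn < gC (t + 1) - gC t ∧ gC (t + 1) - gC t < P.rCup) ∧
  (∀ t', t ≤ t' → t' ≤ T → P.Elo < e t' ∧ e t' < P.Ehi)

/-- The set of profits attainable over the feasible set `S`. -/
def profitSet (T : ℕ) (P : ESRParams) (piD piC : ℕ → ℝ)
    (fD fC : ℕ → ℝ → ℝ) : Set ℝ :=
  {x | ∃ pD pC e, Feasible T P pD pC e ∧ x = profit T piD piC fD fC pD pC}

/-- `Q(π) = sup` of the profit over the feasible set `S`. -/
noncomputable def Qmax (T : ℕ) (P : ESRParams) (piD piC : ℕ → ℝ)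
    (fD fC : ℕ → ℝ → ℝ) : ℝ :=
  sSup (profitSet T P piD piC fD fC)

/-- Lost opportunity cost of a dispatch: `LOC(π) = Q(π) − profit(π; ·)`. -/
noncomputable def LOC (T : ℕ) (P : ESRParams) (piD piC : ℕ → ℝ)
    (fD fC : ℕ → ℝ → ℝ) (pD pC : ℕ → ℝ) : ℝ :=
  Qmax T P piD piC fD fC - profit T piD piC fD fC pD pC

/-!
Changing one level at interval `t` by a small amount and shifting the state of charge by the
corresponding energy from `t` to the end of the horizon keeps every constraint satisfied: the ones
affected are exactly those assumed to be slack. Along this perturbation the profit varies only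
through a one-variable function whose derivative is, up to sign, the price minus the marginal bid,
so by Fermat's theorem the dispatch is not even a local maximum. The levels range over a bounded
box, so `Q(π)` is finite and dominates the improved profit.
-/

open Filter Function Set Topology

section Constraints

/-- The ramp and capacity constraints, over intervals `1, …, T`, on a single sequence of levels with
initial value `x₀`. The discharge and the charge levels of an ESR each satisfy one instance. -/
def RampCapFeasible (T : ℕ) (x₀ dn up cap : ℝ) (x : ℕ → ℝ) : Prop :=
  x 0 = x₀ ∧ ∀ s ∈ Finset.Icc 1 T, x s - x (s - 1) ∈ Icc (-dn) up ∧ x s ∈ Icc 0 cap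

/-- Slackness of all the ramp and capacity constraints that involve the level at interval `t`.
There is no ramp constraint from `t` to `t + 1` when `t = T`. -/
def RampCapSlackAt (T : ℕ) (dn up cap : ℝ) (x : ℕ → ℝ) (t : ℕ) : Prop :=
  x t ∈ Ioo 0 cap ∧ x t - x (t - 1) ∈ Ioo (-dn) up ∧
    (t < T → x (t + 1) - x t ∈ Ioo (-dn) up)

/-- The state-of-charge constraints: `e` starts at `e₀`, increases by the net charge `q s` during
interval `s`, and stays between `lo` and `hi`. -/
def SOCFeasible (T : ℕ) (e₀ lo hi : ℝ) (q e : ℕ → ℝ) : Prop :=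
  e 0 = e₀ ∧ ∀ s ∈ Finset.Icc 1 T, e s - e (s - 1) = q s ∧ e s ∈ Icc lo hi

/-- The energy added to the storage in each interval, net of conversion losses. -/
noncomputable def netCharge (P : ESRParams) (pD pC : ℕ → ℝ) (s : ℕ) : ℝ :=
  P.xiC * pC s - pD s / P.xiD

variable {T t : ℕ} {P : ESRParams}

theorem feasible_iff {pD pC e : ℕ → ℝ} :
    Feasible T P pD pC e ↔
      RampCapFeasible T P.pD0 P.rDdn P.rDup P.gDmax pD ∧
      RampCapFeasible T P.pC0 P.rCdn P.rCup P.gCmax pC ∧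
      SOCFeasible T P.E0 P.Elo P.Ehi (netCharge P pD pC) e := by
  simp only [Feasible, RampCapFeasible, SOCFeasible, netCharge, mem_Icc]
  grind

theorem marginalD_iff {x e : ℕ → ℝ} :
    MarginalD T P x e t ↔
      RampCapSlackAt T P.rDdn P.rDup P.gDmax x t ∧
      ∀ s, t ≤ s → s ≤ T → e s ∈ Ioo P.Elo P.Ehi := by
  simp only [MarginalD, RampCapSlackAt, mem_Ioo, and_assoc]

theorem marginalC_iff {x e : ℕ → ℝ} :
    MarginalC T P x e t ↔
      RampCapSlackAt T P.rCdn P.rCup P.gCmax x t ∧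
      ∀ s, t ≤ s → s ≤ T → e s ∈ Ioo P.Elo P.Ehi := by
  simp only [MarginalC, RampCapSlackAt, mem_Ioo, and_assoc]

theorem netCharge_update_left (pD pC : ℕ → ℝ) (t : ℕ) (y : ℝ) :
    netCharge P (update pD t y) pC = netCharge P pD pC + Pi.single t (-((y - pD t) / P.xiD)) := by
  ext s
  rcases eq_or_ne s t with rfl | hs
  · simp only [netCharge, update_self, Pi.add_apply, Pi.single_eq_same]
    ring
  · simp only [netCharge, update_of_ne hs, Pi.add_apply, Pi.single_eq_of_ne hs, add_zero]

theorem netCharge_update_right (pD pC : ℕ → ℝ) (t : ℕ) (y : ℝ) :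
    netCharge P pD (update pC t y) = netCharge P pD pC + Pi.single t (P.xiC * (y - pC t)) := by
  ext s
  rcases eq_or_ne s t with rfl | hs
  · simp only [netCharge, update_self, Pi.add_apply, Pi.single_eq_same]
    ring
  · simp only [netCharge, update_of_ne hs, Pi.add_apply, Pi.single_eq_of_ne hs, add_zero]

theorem RampCapFeasible.eventually_update {x₀ dn up cap : ℝ} {x : ℕ → ℝ}
    (hx : RampCapFeasible T x₀ dn up cap x) (ht : t ≠ 0) (hslack : RampCapSlackAt T dn up cap x t) :
    ∀ᶠ y in 𝓝 (x t), RampCapFeasible T x₀ dn up cap (update x t y) := by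
  obtain ⟨hcap, hramp, hramp_succ⟩ := hslack
  have constraints : ∀ s ∈ Finset.Icc 1 T, ∀ᶠ y in 𝓝 (x t),
      update x t y s - update x t y (s - 1) ∈ Icc (-dn) up ∧ update x t y s ∈ Icc 0 cap := by
    intro s hs
    obtain ⟨hs₁, hsT⟩ := Finset.mem_Icc.1 hs
    obtain ⟨hramp_s, hcap_s⟩ := hx.2 s hs
    rcases eq_or_ne s t with rfl | hst
    · have hpred : s - 1 ≠ s := by omega
      simp only [update_self, update_of_ne hpred]
      have hcont : ContinuousAt (fun y ↦ y - x (s - 1)) (x s) := by fun_prop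
      exact (hcont.eventually_mem (Icc_mem_nhds hramp.1 hramp.2)).and
        (Icc_mem_nhds hcap.1 hcap.2)
    · rcases eq_or_ne (s - 1) t with rfl | hpred
      · simp only [update_self, update_of_ne hst]
        have hslack_s := hramp_succ (by omega)
        rw [Nat.sub_add_cancel hs₁] at hslack_s
        have hcont : ContinuousAt (fun y ↦ x s - y) (x (s - 1)) := by fun_prop
        exact (hcont.eventually_mem (Icc_mem_nhds hslack_s.1 hslack_s.2)).and
          (.of_forall fun _ ↦ hcap_s)
      · simp only [update_of_ne hst, update_of_ne hpred]
        exact .of_forall fun _ ↦ ⟨hramp_s, hcap_s⟩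
  filter_upwards [(Finset.eventually_all _).2 constraints] with y hy
  exact ⟨(update_of_ne ht.symm y x).trans hx.1, hy⟩

theorem SOCFeasible.eventually_add_indicator {e₀ lo hi : ℝ} {q e : ℕ → ℝ}
    (he : SOCFeasible T e₀ lo hi q e) (ht : t ≠ 0)
    (hslack : ∀ s, t ≤ s → s ≤ T → e s ∈ Ioo lo hi) :
    ∀ᶠ δ in 𝓝 (0 : ℝ),
      SOCFeasible T e₀ lo hi (q + Pi.single t δ) (e + (Ici t).indicator fun _ ↦ δ) := by
  have limits : ∀ s ∈ Finset.Icc 1 T, ∀ᶠ δ in 𝓝 (0 : ℝ),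
      (e + (Ici t).indicator fun _ ↦ δ) s ∈ Icc lo hi := by
    intro s hs
    by_cases hts : t ≤ s
    · obtain ⟨hlo, hhi⟩ := hslack s hts (Finset.mem_Icc.1 hs).2
      simp only [Pi.add_apply, indicator_of_mem (mem_Ici.2 hts)]
      have hcont : ContinuousAt (fun δ ↦ e s + δ) 0 := by fun_prop
      exact hcont.eventually_mem (Icc_mem_nhds (by simpa using hlo) (by simpa using hhi))
    · simp only [Pi.add_apply, indicator_of_notMem (mt mem_Ici.1 hts), add_zero]
      exact .of_forall fun _ ↦ (he.2 s hs).2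
  filter_upwards [(Finset.eventually_all _).2 limits] with δ hδ
  refine ⟨by simpa [ht] using he.1, fun s hs ↦ ⟨?_, hδ s hs⟩⟩
  have jump : (Ici t).indicator (fun _ ↦ δ) s - (Ici t).indicator (fun _ ↦ δ) (s - 1) =
      (Pi.single t δ : ℕ → ℝ) s := by
    have hs₁ : 1 ≤ s := (Finset.mem_Icc.1 hs).1
    simp only [indicator_apply, mem_Ici, Pi.single_apply]
    grind
  simp only [Pi.add_apply]
  rw [add_sub_add_comm, (he.2 s hs).1, jump]

theorem MarginalD.eventually_feasible {gD gC E : ℕ → ℝ} (hfeas : Feasible T P gD gC E)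
    (ht : t ≠ 0) (hm : MarginalD T P gD E t) :
    ∀ᶠ y in 𝓝 (gD t), ∃ e, Feasible T P (update gD t y) gC e := by
  obtain ⟨hD, hC, hE⟩ := feasible_iff.1 hfeas
  obtain ⟨hslack, hslack_soc⟩ := marginalD_iff.1 hm
  have hδ : Tendsto (fun y ↦ -((y - gD t) / P.xiD)) (𝓝 (gD t)) (𝓝 0) :=
    Continuous.tendsto' (by fun_prop) _ _ (by simp)
  filter_upwards [hD.eventually_update ht hslack,
    hδ.eventually (hE.eventually_add_indicator ht hslack_soc)] with y hyD hyE
  exact ⟨_, feasible_iff.2 ⟨hyD, hC, netCharge_update_left gD gC t y ▸ hyE⟩⟩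

theorem MarginalC.eventually_feasible {gD gC E : ℕ → ℝ} (hfeas : Feasible T P gD gC E)
    (ht : t ≠ 0) (hm : MarginalC T P gC E t) :
    ∀ᶠ y in 𝓝 (gC t), ∃ e, Feasible T P gD (update gC t y) e := by
  obtain ⟨hD, hC, hE⟩ := feasible_iff.1 hfeas
  obtain ⟨hslack, hslack_soc⟩ := marginalC_iff.1 hm
  have hδ : Tendsto (fun y ↦ P.xiC * (y - gC t)) (𝓝 (gC t)) (𝓝 0) :=
    Continuous.tendsto' (by fun_prop) _ _ (by simp)
  filter_upwards [hC.eventually_update ht hslack,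
    hδ.eventually (hE.eventually_add_indicator ht hslack_soc)] with y hyC hyE
  exact ⟨_, feasible_iff.2 ⟨hD, hyC, netCharge_update_right gD gC t y ▸ hyE⟩⟩

end Constraints

theorem frequently_lt_of_hasDerivAt_ne_zero {f : ℝ → ℝ} {f' x : ℝ} (hf : HasDerivAt f f' x)
    (hf' : f' ≠ 0) : ∃ᶠ y in 𝓝 x, f x < f y := by
  contrapose! hf'
  exact IsLocalMax.hasDerivAt_eq_zero hf' hf

theorem sum_apply_lt_sum_apply_update {ι α M : Type*} [DecidableEq ι] [AddCommMonoid M]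
    [PartialOrder M] [IsOrderedCancelAddMonoid M] {S : Finset ι} {i : ι} (hi : i ∈ S)
    (φ : ι → α → M) (x : ι → α) {y : α} (h : φ i (x i) < φ i y) :
    ∑ j ∈ S, φ j (x j) < ∑ j ∈ S, φ j (update x i y j) := by
  refine Finset.sum_lt_sum (fun j _ ↦ ?_) ⟨i, hi, by rwa [update_self]⟩
  rcases eq_or_ne j i with rfl | hj
  · rw [update_self]
    exact h.le
  · rw [update_of_ne hj]

section Profit

variable {T t : ℕ} {P : ESRParams} {piD piC : ℕ → ℝ} {fD fC : ℕ → ℝ → ℝ} {gD gC E : ℕ → ℝ}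

theorem profit_eq_add (T : ℕ) (piD piC : ℕ → ℝ) (fD fC : ℕ → ℝ → ℝ) (pD pC : ℕ → ℝ) :
    profit T piD piC fD fC pD pC =
      ∑ s ∈ Finset.Icc 1 T, (piD s * pD s - fD s (pD s)) +
        ∑ s ∈ Finset.Icc 1 T, (fC s (pC s) - piC s * pC s) := by
  rw [profit, ← Finset.sum_add_distrib]
  exact Finset.sum_congr rfl fun s _ ↦ by ring

theorem MarginalD.exists_profit_lt (hfeas : Feasible T P gD gC E) (ht : t ∈ Finset.Icc 1 T)
    (hm : MarginalD T P gD E t) (hf : DifferentiableAt ℝ (fD t) (gD t))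
    (hne : piD t ≠ deriv (fD t) (gD t)) :
    ∃ pD pC e, Feasible T P pD pC e ∧
      profit T piD piC fD fC gD gC < profit T piD piC fD fC pD pC := by
  have ht₀ : t ≠ 0 := Nat.one_le_iff_ne_zero.1 (Finset.mem_Icc.1 ht).1
  have hderiv : HasDerivAt (fun y ↦ piD t * y - fD t y) (piD t - deriv (fD t) (gD t)) (gD t) :=
    (hasDerivAt_const_mul (piD t)).sub hf.hasDerivAt
  obtain ⟨y, hlt, e, hy⟩ := ((frequently_lt_of_hasDerivAt_ne_zero hderiv
    (sub_ne_zero.2 hne)).and_eventually (hm.eventually_feasible hfeas ht₀)).exists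
  refine ⟨_, _, e, hy, ?_⟩
  rw [profit_eq_add, profit_eq_add]
  gcongr ?_ + _
  exact sum_apply_lt_sum_apply_update ht (fun s z ↦ piD s * z - fD s z) gD hlt

theorem MarginalC.exists_profit_lt (hfeas : Feasible T P gD gC E) (ht : t ∈ Finset.Icc 1 T)
    (hm : MarginalC T P gC E t) (hf : DifferentiableAt ℝ (fC t) (gC t))
    (hne : piC t ≠ deriv (fC t) (gC t)) :
    ∃ pD pC e, Feasible T P pD pC e ∧
      profit T piD piC fD fC gD gC < profit T piD piC fD fC pD pC := by
  have ht₀ : t ≠ 0 := Nat.one_le_iff_ne_zero.1 (Finset.mem_Icc.1 ht).1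
  have hderiv : HasDerivAt (fun y ↦ fC t y - piC t * y) (deriv (fC t) (gC t) - piC t) (gC t) :=
    hf.hasDerivAt.sub (hasDerivAt_const_mul (piC t))
  obtain ⟨y, hlt, e, hy⟩ := ((frequently_lt_of_hasDerivAt_ne_zero hderiv
    (sub_ne_zero.2 hne.symm)).and_eventually (hm.eventually_feasible hfeas ht₀)).exists
  refine ⟨_, _, e, hy, ?_⟩
  rw [profit_eq_add, profit_eq_add]
  gcongr _ + ?_
  exact sum_apply_lt_sum_apply_update ht (fun s z ↦ fC s z - piC s * z) gC hlt

theorem bddAbove_profitSet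
    (hfD : ∀ s ∈ Finset.Icc 1 T, ContinuousOn (fD s) (Icc 0 P.gDmax))
    (hfC : ∀ s ∈ Finset.Icc 1 T, ContinuousOn (fC s) (Icc 0 P.gCmax)) :
    BddAbove (profitSet T P piD piC fD fC) := by
  have hD : ∀ s ∈ Finset.Icc 1 T, ∃ M, ∀ y ∈ Icc 0 P.gDmax, piD s * y - fD s y ≤ M := by
    intro s hs
    have hcont : ContinuousOn (fun y ↦ piD s * y - fD s y) (Icc 0 P.gDmax) :=
      (by fun_prop : ContinuousOn (fun y ↦ piD s * y) _).sub (hfD s hs)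
    exact (isCompact_Icc.bddAbove_image hcont).imp fun M hM y hy ↦ hM (mem_image_of_mem _ hy)
  have hC : ∀ s ∈ Finset.Icc 1 T, ∃ M, ∀ y ∈ Icc 0 P.gCmax, fC s y - piC s * y ≤ M := by
    intro s hs
    have hcont : ContinuousOn (fun y ↦ fC s y - piC s * y) (Icc 0 P.gCmax) :=
      (hfC s hs).sub (by fun_prop)
    exact (isCompact_Icc.bddAbove_image hcont).imp fun M hM y hy ↦ hM (mem_image_of_mem _ hy)
  choose! MD hMD using hD
  choose! MC hMC using hC
  refine ⟨∑ s ∈ Finset.Icc 1 T, MD s + ∑ s ∈ Finset.Icc 1 T, MC s, ?_⟩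
  rintro _ ⟨pD, pC, e, hfeas, rfl⟩
  obtain ⟨⟨-, hpD⟩, ⟨-, hpC⟩, -⟩ := feasible_iff.1 hfeas
  rw [profit_eq_add]
  gcongr with s hs s hs
  · exact hMD s hs _ (hpD s hs).2
  · exact hMC s hs _ (hpC s hs).2

theorem LOC_pos_of_profit_lt (hbdd : BddAbove (profitSet T P piD piC fD fC))
    (h : ∃ pD pC e, Feasible T P pD pC e ∧
      profit T piD piC fD fC gD gC < profit T piD piC fD fC pD pC) :
    0 < LOC T P piD piC fD fC gD gC := by
  obtain ⟨pD, pC, e, hfeas, hlt⟩ := h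
  exact sub_pos.2 (hlt.trans_le (le_csSup hbdd ⟨pD, pC, e, hfeas, rfl⟩))

end Profit

theorem positive_LOC_of_price_ne_marginal_cost_general
    (T : ℕ) (P : ESRParams) (piD piC : ℕ → ℝ) (fD fC : ℕ → ℝ → ℝ)
    (hfD : ∀ s ∈ Finset.Icc 1 T, ContinuousOn (fD s) (Icc 0 P.gDmax))
    (hfC : ∀ s ∈ Finset.Icc 1 T, ContinuousOn (fC s) (Icc 0 P.gCmax))
    (gD gC E : ℕ → ℝ) (hfeas : Feasible T P gD gC E) (t : ℕ) (ht : t ∈ Finset.Icc 1 T) :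
    (MarginalD T P gD E t → DifferentiableAt ℝ (fD t) (gD t) → piD t ≠ deriv (fD t) (gD t) →
      (∃ pD pC e, Feasible T P pD pC e ∧
        profit T piD piC fD fC gD gC < profit T piD piC fD fC pD pC) ∧
      0 < LOC T P piD piC fD fC gD gC) ∧
    (MarginalC T P gC E t → DifferentiableAt ℝ (fC t) (gC t) → piC t ≠ deriv (fC t) (gC t) →
      (∃ pD pC e, Feasible T P pD pC e ∧
        profit T piD piC fD fC gD gC < profit T piD piC fD fC pD pC) ∧
      0 < LOC T P piD piC fD fC gD gC) := by
  have hbdd : BddAbove (profitSet T P piD piC fD fC) := bddAbove_profitSet hfD hfC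
  refine ⟨fun hm hf hne ↦ ?_, fun hm hf hne ↦ ?_⟩
  · have hprofit := hm.exists_profit_lt (piC := piC) (fC := fC) hfeas ht hf hne
    exact ⟨hprofit, LOC_pos_of_profit_lt hbdd hprofit⟩
  · have hprofit := hm.exists_profit_lt (piD := piD) (fD := fD) hfeas ht hf hne
    exact ⟨hprofit, LOC_pos_of_profit_lt hbdd hprofit⟩

/-!
STATEMENT 4.

If `(gD, gC, E) ∈ S` is marginal (in the discharge resp. charge direction)
at some interval `t` and the uniform price differs from the marginal bid-in
cost there, then some feasible dispatch attains strictly larger profit, and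
consequently `LOC(π) = Q(π) − profit(π; gD, gC) > 0`. -/
theorem positive_LOC_of_price_ne_marginal_cost
    (T : ℕ) (P : ESRParams) (π : ℕ → ℝ) (fD fC : ℕ → ℝ → ℝ)
    (hfDconv : ∀ t, ConvexOn ℝ Set.univ (fD t))
    (hfDdiff : ∀ t, Differentiable ℝ (fD t))
    (hfCconc : ∀ t, ConcaveOn ℝ Set.univ (fC t))
    (hfCdiff : ∀ t, Differentiable ℝ (fC t))
    (gD gC E : ℕ → ℝ)
    (hfeas : Feasible T P gD gC E)
    (t : ℕ) (ht1 : 1 ≤ t) (htT : t ≤ T) :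
    (MarginalD T P gD E t → π t ≠ deriv (fD t) (gD t) →
      (∃ pD pC e, Feasible T P pD pC e ∧
        profit T π π fD fC gD gC < profit T π π fD fC pD pC) ∧
      0 < LOC T P π π fD fC gD gC) ∧
    (MarginalC T P gC E t → π t ≠ deriv (fC t) (gC t) →
      (∃ pD pC e, Feasible T P pD pC e ∧
        profit T π π fD fC gD gC < profit T π π fD fC pD pC) ∧
      0 < LOC T P π π fD fC gD gC) := by
  have h := positive_LOC_of_price_ne_marginal_cost_general T P π π fD fC
    (fun s _ ↦ (hfDdiff s).continuous.continuousOn) (fun s _ ↦ (hfCdiff s).continuous.continuousOn)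
    gD gC E hfeas t (Finset.mem_Icc.2 ⟨ht1, htT⟩)
  exact ⟨fun hm ↦ h.1 hm (hfDdiff t _), fun hm ↦ h.2 hm (hfCdiff t _)⟩
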